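/- Let R be a (not necessarily commutative) ring and let S ⊆ R be a set of idempotents (e*e = e for all e ∈ S) that is closed under multiplication and under the operation x∘y = x + y - x*y. Then (S, *, ∘) is a skew lattice: for all x, y, z ∈ S both operations are idempotent (x*x = x, x∘x = x), associative (which for * and ∘ restricted to S follows from ring associativity: (x*y)*z = x*(y*z) and (x∘y)∘z = x∘(y∘z)), and the absorption laws x*(x∘y) = x, (y∘x)*x = x, x∘(x*y) = x, (y*x)∘x = x hold. -/

import Mathlib

/-- The circle operation x∘y = x + y - x*y. -/
def ringCirc {R : Type*} [Ring R] (x y : R) : R := x + y - x * y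

section RingCirc

variable {R : Type*} [Ring R] {x : R}

/-- The complement `x ↦ 1 - x` exchanges `∘` and `*` and preserves idempotents, so each law for `∘`
is the complement of a law for `*`. -/
theorem one_sub_ringCirc (x y : R) : 1 - ringCirc x y = (1 - x) * (1 - y) := by
  unfold ringCirc
  noncomm_ring

theorem ringCirc_one_sub (x y : R) : ringCirc (1 - x) (1 - y) = 1 - x * y := by
  unfold ringCirc
  noncomm_ring

theorem ringCirc_assoc (x y z : R) :
    ringCirc (ringCirc x y) z = ringCirc x (ringCirc y z) := by
  apply sub_right_injective (b := (1 : R))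
  simp only [one_sub_ringCirc, mul_assoc]

theorem ringCirc_self (hx : IsIdempotentElem x) : ringCirc x x = x := by
  apply sub_right_injective (b := (1 : R))
  simpa only [one_sub_ringCirc] using hx.one_sub.eq

theorem self_mul_ringCirc (hx : IsIdempotentElem x) (y : R) : x * ringCirc x y = x := by
  have h : x * (1 - ringCirc x y) = 0 := by
    rw [one_sub_ringCirc, ← mul_assoc, hx.mul_one_sub_self, zero_mul]
  rwa [mul_one_sub, sub_eq_zero, eq_comm] at h

theorem ringCirc_mul_self (hx : IsIdempotentElem x) (y : R) : ringCirc y x * x = x := by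
  have h : (1 - ringCirc y x) * x = 0 := by
    rw [one_sub_ringCirc, mul_assoc, hx.one_sub_mul_self, mul_zero]
  rwa [one_sub_mul, sub_eq_zero, eq_comm] at h

theorem self_ringCirc_mul (hx : IsIdempotentElem x) (y : R) : ringCirc x (x * y) = x := by
  apply sub_right_injective (b := (1 : R))
  calc
    1 - ringCirc x (x * y) = (1 - x) * ringCirc (1 - x) (1 - y) := by
      rw [one_sub_ringCirc, ringCirc_one_sub]
    _ = 1 - x := self_mul_ringCirc hx.one_sub _

theorem mul_ringCirc_self (hx : IsIdempotentElem x) (y : R) : ringCirc (y * x) x = x := by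
  apply sub_right_injective (b := (1 : R))
  calc
    1 - ringCirc (y * x) x = ringCirc (1 - y) (1 - x) * (1 - x) := by
      rw [one_sub_ringCirc, ringCirc_one_sub]
    _ = 1 - x := ringCirc_mul_self hx.one_sub _

theorem idempotents_skewLattice_general (hx : IsIdempotentElem x) (y z : R) :
    x * x = x ∧
    ringCirc x x = x ∧
    (x * y) * z = x * (y * z) ∧
    ringCirc (ringCirc x y) z = ringCirc x (ringCirc y z) ∧
    x * ringCirc x y = x ∧
    ringCirc y x * x = x ∧
    ringCirc x (x * y) = x ∧
    ringCirc (y * x) x = x :=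
  ⟨hx.eq, ringCirc_self hx, mul_assoc x y z, ringCirc_assoc x y z, self_mul_ringCirc hx y,
    ringCirc_mul_self hx y, self_ringCirc_mul hx y, mul_ringCirc_self hx y⟩

end RingCirc

/-- A set of idempotents in a ring closed under * and ∘ forms a skew lattice. -/
theorem idempotents_skewLattice {R : Type*} [Ring R] (S : Set R)
    (hidem : ∀ e ∈ S, e * e = e)
    (hmul : ∀ x ∈ S, ∀ y ∈ S, x * y ∈ S)
    (hcirc : ∀ x ∈ S, ∀ y ∈ S, ringCirc x y ∈ S) :
    ∀ x ∈ S, ∀ y ∈ S, ∀ z ∈ S,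
      x * x = x ∧
      ringCirc x x = x ∧
      (x * y) * z = x * (y * z) ∧
      ringCirc (ringCirc x y) z = ringCirc x (ringCirc y z) ∧
      x * ringCirc x y = x ∧
      ringCirc y x * x = x ∧
      ringCirc x (x * y) = x ∧
      ringCirc (y * x) x = x :=
  fun x hx y _ z _ => idempotents_skewLattice_general (hidem x hx) y z
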